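/- arXiv:1810.12518 — 3 statements merged into one kernel-verified Lean document; each statement's English description precedes it below -/
import Mathlib

section
/- Let (M, d) be a metric space, (Ω, F) a measurable space, ε > 0, and let H be a nonempty subset of M. Suppose Â : H → P(Ω) is an ε-differentially private randomized algorithm on H, i.e., for all D₁, D₂ ∈ H and all measurable S ⊆ Ω, P(Â(D₁) ∈ S) ≤ exp(ε·d(D₁,D₂))·P(Â(D₂) ∈ S). Then there exists a randomized algorithm A : M → P(Ω) defined on all of M such that A is 2ε-differentially private (for all D₁, D₂ ∈ M and all measurable S, P(A(D₁) ∈ S) ≤ exp(2ε·d(D₁,D₂))·P(A(D₂) ∈ S)), and for every D ∈ H, A(D) and Â(D) are equal as probability measures. -/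
open MeasureTheory ENNReal

/-- **Extending private algorithms at ε-cost.** Any ε-differentially private
randomized algorithm defined on a nonempty subset `H` of a metric space `M`
extends to a 2ε-differentially private algorithm on all of `M`, agreeing
(as probability measures) with the original algorithm on `H`. -/
theorem private_algorithms_can_always_be_extended
    {M Ω : Type*} [MetricSpace M] [MeasurableSpace Ω]
    (ε : ℝ) (hε : 0 < ε) (H : Set M) (hH : H.Nonempty)
    (Ahat : M → Measure Ω)
    (hprob : ∀ D ∈ H, IsProbabilityMeasure (Ahat D))
    (hDP : ∀ D₁ ∈ H, ∀ D₂ ∈ H, ∀ S : Set Ω, MeasurableSet S →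
      Ahat D₁ S ≤ ENNReal.ofReal (Real.exp (ε * dist D₁ D₂)) * Ahat D₂ S) :
    ∃ A : M → Measure Ω,
      (∀ D : M, IsProbabilityMeasure (A D)) ∧
      (∀ D₁ D₂ : M, ∀ S : Set Ω, MeasurableSet S →
        A D₁ S ≤ ENNReal.ofReal (Real.exp (2 * ε * dist D₁ D₂)) * A D₂ S) ∧
      (∀ D ∈ H, A D = Ahat D) := by
  classical
  let e : ℝ → ℝ≥0∞ := fun t => ENNReal.ofReal (Real.exp t)
  have e_add : ∀ s t, e (s + t) = e s * e t := by
    intro s t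
    simp only [e]
    rw [Real.exp_add, ENNReal.ofReal_mul (Real.exp_pos _).le]
  have e_mono : ∀ s t, s ≤ t → e s ≤ e t := fun s t h =>
    ENNReal.ofReal_le_ofReal (Real.exp_le_exp.2 h)
  have e_zero : e 0 = 1 := by simp [e]
  have e_ne : ∀ t, e t ≠ 0 := fun t => by simp [e, Real.exp_pos]
  have e_top : ∀ t, e t ≠ ∞ := fun t => ENNReal.ofReal_ne_top
  let ν : M → Measure Ω := fun D => ⨆ D' : H, e (-(ε * dist D D')) • Ahat D'
  have le_ν : ∀ (D : M) (D' : H), e (-(ε * dist D D')) • Ahat D' ≤ ν D := fun D D' =>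
    le_iSup (fun D' : H => e (-(ε * dist D D')) • Ahat D') D'
  have ν_le : ∀ D, ∀ D₀ ∈ H, ν D ≤ e (ε * dist D D₀) • Ahat D₀ := by
    intro D D₀ h₀
    refine iSup_le fun D' => Measure.le_iff.2 fun S hS => ?_
    simp only [Measure.smul_apply, smul_eq_mul]
    calc e (-(ε * dist D D')) * Ahat D' S
        ≤ e (-(ε * dist D D')) * (e (ε * dist (D' : M) D₀) * Ahat D₀ S) := by
          gcongr
          exact hDP _ D'.2 _ h₀ S hS
      _ = e (-(ε * dist D D') + ε * dist (D' : M) D₀) * Ahat D₀ S := by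
          rw [e_add, mul_assoc]
      _ ≤ _ := by
          gcongr
          apply e_mono
          have := dist_triangle (D' : M) D D₀
          rw [dist_comm (D' : M) D] at this
          nlinarith
  have ν_dp : ∀ D₁ D₂, ν D₁ ≤ e (ε * dist D₁ D₂) • ν D₂ := by
    intro D₁ D₂
    refine iSup_le fun D' => Measure.le_iff.2 fun S hS => ?_
    simp only [Measure.smul_apply, smul_eq_mul]
    have h1 : e (-(ε * dist D₂ D')) * Ahat D' S ≤ ν D₂ S := le_ν D₂ D' S
    calc e (-(ε * dist D₁ D')) * Ahat D' S
        ≤ e (ε * dist D₁ D₂ + -(ε * dist D₂ D')) * Ahat D' S := by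
          gcongr
          apply e_mono
          have := dist_triangle D₂ D₁ (D' : M)
          rw [dist_comm D₂ D₁] at this
          nlinarith
      _ = e (ε * dist D₁ D₂) * (e (-(ε * dist D₂ D')) * Ahat D' S) := by
          rw [e_add, mul_assoc]
      _ ≤ _ := by gcongr
  have ν_eq : ∀ D ∈ H, ν D = Ahat D := by
    intro D hD
    apply le_antisymm
    · simpa [e_zero] using ν_le D D hD
    · simpa [e_zero] using le_ν D ⟨D, hD⟩
  obtain ⟨D₀, h₀⟩ := hH
  have m_top : ∀ D, ν D Set.univ ≠ ∞ := by
    intro D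
    have := hprob D₀ h₀
    refine ne_top_of_le_ne_top ?_ (ν_le D D₀ h₀ Set.univ)
    simpa using e_top _
  have m_ne : ∀ D, ν D Set.univ ≠ 0 := by
    intro D h
    have := hprob D₀ h₀
    have h2 := le_ν D ⟨D₀, h₀⟩ Set.univ
    rw [h] at h2
    simp only [Measure.smul_apply, smul_eq_mul, measure_univ, mul_one] at h2
    exact e_ne _ (le_antisymm h2 (zero_le))
  refine ⟨fun D => (ν D Set.univ)⁻¹ • ν D, ?_, ?_, ?_⟩
  · intro D
    constructor
    simp only [Measure.smul_apply, smul_eq_mul]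
    exact ENNReal.inv_mul_cancel (m_ne D) (m_top D)
  · intro D₁ D₂ S hS
    change (ν D₁ Set.univ)⁻¹ * ν D₁ S ≤ e (2 * ε * dist D₁ D₂) * ((ν D₂ Set.univ)⁻¹ * ν D₂ S)
    have h1 : ν D₁ S ≤ e (ε * dist D₁ D₂) * ν D₂ S := ν_dp D₁ D₂ S
    have h2 : ν D₂ Set.univ ≤ e (ε * dist D₁ D₂) * ν D₁ Set.univ := by
      have := ν_dp D₂ D₁ Set.univ
      rw [dist_comm] at this
      exact this
    have h3 : (ν D₁ Set.univ)⁻¹ ≤ e (ε * dist D₁ D₂) * (ν D₂ Set.univ)⁻¹ := by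
      rw [← div_eq_mul_inv, ENNReal.le_div_iff_mul_le (Or.inl (m_ne _)) (Or.inl (m_top _))]
      rw [mul_comm, ← div_eq_mul_inv]
      exact ENNReal.div_le_of_le_mul h2
    calc (ν D₁ Set.univ)⁻¹ * ν D₁ S
        ≤ (e (ε * dist D₁ D₂) * (ν D₂ Set.univ)⁻¹) * (e (ε * dist D₁ D₂) * ν D₂ S) := by
          gcongr
      _ = _ := by
          rw [show 2 * ε * dist D₁ D₂ = ε * dist D₁ D₂ + ε * dist D₁ D₂ by ring, e_add]
          ring
  · intro D hD
    have := hprob D hD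
    simp [ν_eq D hD]
end

section
/- Let (M, d) be a metric space, (Ω, F) a measurable space, ε > 0, H ⊆ M nonempty, and μ a probability measure on (Ω, F). Let (f_{D'})_{D' ∈ H} be a family of nonnegative measurable functions on Ω, and for D ∈ M define Z_D = ∫_Ω inf_{D' ∈ H} [exp(ε·d(D,D'))·f_{D'}(ω)] dμ(ω). Then for all D₁, D₂ ∈ M, Z_{D₁} ≤ exp(ε·d(D₁,D₂))·Z_{D₂}. -/
open MeasureTheory ENNReal

/-- Lipschitz property of the normalizing constants: with
`Z_D = ∫_Ω inf_{D' ∈ H} exp(ε·d(D,D'))·f_{D'} dμ`, one has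
`Z_{D₁} ≤ exp(ε·d(D₁,D₂))·Z_{D₂}` for all `D₁, D₂ ∈ M`. -/
theorem normalizing_constant_lipschitz
    {M Ω : Type*} [MetricSpace M] [MeasurableSpace Ω]
    (ε : ℝ) (hε : 0 < ε) (H : Set M) (hH : H.Nonempty)
    (μ : Measure Ω) [IsProbabilityMeasure μ]
    (f : M → Ω → ℝ≥0∞)
    (hmeas : ∀ D' ∈ H, Measurable (f D'))
    (D₁ D₂ : M) :
    (∫⁻ ω, ⨅ D' : H, ENNReal.ofReal (Real.exp (ε * dist D₁ (D' : M))) * f (D' : M) ω ∂μ)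
      ≤ ENNReal.ofReal (Real.exp (ε * dist D₁ D₂)) *
        ∫⁻ ω, ⨅ D' : H, ENNReal.ofReal (Real.exp (ε * dist D₂ (D' : M))) * f (D' : M) ω ∂μ := by
  rw [← lintegral_const_mul' _ _ ENNReal.ofReal_ne_top]
  refine lintegral_mono fun ω => ?_
  have : Nonempty H := hH.to_subtype
  dsimp only
  rw [ENNReal.mul_iInf_of_ne (by simp [Real.exp_pos]) ENNReal.ofReal_ne_top]
  refine iInf_mono fun D' => ?_
  rw [← mul_assoc, ← ENNReal.ofReal_mul (Real.exp_pos _).le, ← Real.exp_add, ← mul_add]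
  gcongr
  exact dist_triangle _ _ _
end

section
/- Let (M, d) be a metric space, (Ω, F) a measurable space, ε > 0, and H ⊆ M nonempty. Let Â : H → P(Ω) be an ε-differentially private randomized algorithm, fix D₀ ∈ H, set μ = Â(D₀), and let f_{D'} = d(Â(D'))/dμ for D' ∈ H. For D ∈ M define g_D(ω) = inf_{D' ∈ H} [exp(ε·d(D,D'))·f_{D'}(ω)] and Z_D = ∫_Ω g_D dμ, and assume Z_D > 0 for all D ∈ M. Then for all D₁, D₂ ∈ M and every ω ∈ Ω, (1/Z_{D₁})·g_{D₁}(ω) ≤ exp(2ε·d(D₁,D₂))·(1/Z_{D₂})·g_{D₂}(ω); consequently, the randomized algorithm A : M → P(Ω) defined by dA(D)/dμ = g_D/Z_D is 2ε-differentially private on all of M. -/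
open MeasureTheory ENNReal

/-- With `g_D(ω) = inf_{D' ∈ H} exp(ε·d(D,D'))·f_{D'}(ω)` and
`Z_D = ∫_Ω g_D dμ` assumed positive, for all `D₁, D₂ ∈ M` and every `ω`,
`(1/Z_{D₁})·g_{D₁}(ω) ≤ exp(2ε·d(D₁,D₂))·(1/Z_{D₂})·g_{D₂}(ω)`; consequently
the algorithm `A(D) = (g_D/Z_D)·μ` is 2ε-differentially private on all of `M`. -/
theorem normalized_inf_density_is_two_eps_dp
    {M Ω : Type*} [MetricSpace M] [MeasurableSpace Ω]
    (ε : ℝ) (hε : 0 < ε) (H : Set M) (hH : H.Nonempty)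
    (Ahat : M → Measure Ω)
    (hprob : ∀ D ∈ H, IsProbabilityMeasure (Ahat D))
    (hDP : ∀ D₁ ∈ H, ∀ D₂ ∈ H, ∀ S : Set Ω, MeasurableSet S →
      Ahat D₁ S ≤ ENNReal.ofReal (Real.exp (ε * dist D₁ D₂)) * Ahat D₂ S)
    (D₀ : M) (hD₀ : D₀ ∈ H)
    (f : M → Ω → ℝ≥0∞)
    (hmeas : ∀ D' ∈ H, Measurable (f D'))
    (hdens : ∀ D' ∈ H, ∀ S : Set Ω, MeasurableSet S →
      Ahat D' S = ∫⁻ ω in S, f D' ω ∂(Ahat D₀))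
    (g : M → Ω → ℝ≥0∞)
    (hg : ∀ D ω, g D ω =
      ⨅ D' : H, ENNReal.ofReal (Real.exp (ε * dist D (D' : M))) * f (D' : M) ω)
    (Z : M → ℝ≥0∞)
    (hZ : ∀ D, Z D = ∫⁻ ω, g D ω ∂(Ahat D₀))
    (hZpos : ∀ D, 0 < Z D)
    (A : M → Measure Ω)
    (hA : ∀ D, A D = (Ahat D₀).withDensity (fun ω => g D ω / Z D)) :
    (∀ D₁ D₂ : M, ∀ ω : Ω,
      (Z D₁)⁻¹ * g D₁ ω ≤
        ENNReal.ofReal (Real.exp (2 * ε * dist D₁ D₂)) * ((Z D₂)⁻¹ * g D₂ ω)) ∧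
    (∀ D₁ D₂ : M, ∀ S : Set Ω, MeasurableSet S →
      A D₁ S ≤ ENNReal.ofReal (Real.exp (2 * ε * dist D₁ D₂)) * A D₂ S) := by
  have hgl : ∀ D₁ D₂ ω, g D₁ ω ≤ ENNReal.ofReal (Real.exp (ε * dist D₁ D₂)) * g D₂ ω := by
    intro D₁ D₂ ω
    rw [hg D₁, hg D₂, ENNReal.mul_iInf_of_ne
      (by simpa using Real.exp_pos _) ENNReal.ofReal_ne_top]
    refine le_iInf fun D' => (iInf_le _ D').trans ?_
    rw [← mul_assoc, ← ENNReal.ofReal_mul (Real.exp_pos _).le, ← Real.exp_add]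
    gcongr
    rw [← mul_add]
    exact mul_le_mul_of_nonneg_left (dist_triangle _ _ _) hε.le
  have hZl : ∀ D₁ D₂, Z D₁ ≤ ENNReal.ofReal (Real.exp (ε * dist D₁ D₂)) * Z D₂ := by
    intro D₁ D₂
    rw [hZ, hZ, ← lintegral_const_mul' _ _ ENNReal.ofReal_ne_top]
    exact lintegral_mono fun ω => hgl D₁ D₂ ω
  have hZi : ∀ D₁ D₂, (Z D₁)⁻¹ ≤ ENNReal.ofReal (Real.exp (ε * dist D₁ D₂)) * (Z D₂)⁻¹ := by
    intro D₁ D₂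
    have h := hZl D₂ D₁
    rw [dist_comm] at h
    have hc0 : ENNReal.ofReal (Real.exp (ε * dist D₁ D₂)) ≠ 0 := by
      simpa using Real.exp_pos _
    have hct : ENNReal.ofReal (Real.exp (ε * dist D₁ D₂)) ≠ ⊤ := ENNReal.ofReal_ne_top
    have h2 := ENNReal.inv_le_inv.mpr h
    rw [ENNReal.mul_inv (Or.inl hc0) (Or.inl hct)] at h2
    calc (Z D₁)⁻¹ = ENNReal.ofReal (Real.exp (ε * dist D₁ D₂)) *
          ((ENNReal.ofReal (Real.exp (ε * dist D₁ D₂)))⁻¹ * (Z D₁)⁻¹) := by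
          rw [← mul_assoc, ENNReal.mul_inv_cancel hc0 hct, one_mul]
      _ ≤ _ := by gcongr
  have main : ∀ D₁ D₂ : M, ∀ ω : Ω,
      (Z D₁)⁻¹ * g D₁ ω ≤
        ENNReal.ofReal (Real.exp (2 * ε * dist D₁ D₂)) * ((Z D₂)⁻¹ * g D₂ ω) := by
    intro D₁ D₂ ω
    refine (mul_le_mul' (hZi D₁ D₂) (hgl D₁ D₂ ω)).trans (le_of_eq ?_)
    rw [mul_mul_mul_comm, ← ENNReal.ofReal_mul (Real.exp_pos _).le, ← Real.exp_add]
    congr 3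
    ring
  refine ⟨main, fun D₁ D₂ S hS => ?_⟩
  rw [hA, hA, withDensity_apply _ hS, withDensity_apply _ hS,
    ← lintegral_const_mul' _ _ ENNReal.ofReal_ne_top]
  refine lintegral_mono fun ω => ?_
  simpa only [div_eq_mul_inv, mul_comm (g _ ω)] using main D₁ D₂ ω
end
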